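/- (Theorem 4, (1) ⇒ (3), and Corollary 1.) Suppose J(0, u) ≥ 0 for every control u and there exists an open-loop optimal control for Problem (LQ) with initial value x₀. Then there exists an open-loop optimal control u* for x₀ such that lim_{ε→0⁺} Σ_{t=0}^{N−1}|u^ε_t − u*_t|² = 0, where u^ε is the open-loop optimal control of the perturbed Problem (LQ)_ε for initial value x₀; i.e., the family {u^ε} converges strongly, as ε → 0⁺, to an open-loop optimal control of Problem (LQ) for x₀. -/

import Mathlib

open Matrix Finset

noncomputable section

/-- State trajectory of the discrete-time linear system `x_{t+1} = A_t x_t + B_t u_t`. -/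
def lqState {n m : ℕ} (A : ℕ → Matrix (Fin n) (Fin n) ℝ) (B : ℕ → Matrix (Fin n) (Fin m) ℝ)
    (x₀ : Fin n → ℝ) (u : ℕ → Fin m → ℝ) : ℕ → Fin n → ℝ
  | 0 => x₀
  | t + 1 => A t *ᵥ lqState A B x₀ u t + B t *ᵥ u t

/-- Quadratic cost `J(x₀, u)`. -/
def lqCost {n m : ℕ} (N : ℕ) (A : ℕ → Matrix (Fin n) (Fin n) ℝ)
    (B : ℕ → Matrix (Fin n) (Fin m) ℝ) (Q : ℕ → Matrix (Fin n) (Fin n) ℝ)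
    (R : ℕ → Matrix (Fin m) (Fin m) ℝ) (S : ℕ → Matrix (Fin m) (Fin n) ℝ)
    (H : Matrix (Fin n) (Fin n) ℝ) (x₀ : Fin n → ℝ) (u : ℕ → Fin m → ℝ) : ℝ :=
  (∑ t ∈ range N,
      (lqState A B x₀ u t ⬝ᵥ Q t *ᵥ lqState A B x₀ u t
        + 2 * (u t ⬝ᵥ S t *ᵥ lqState A B x₀ u t)
        + u t ⬝ᵥ R t *ᵥ u t))
    + lqState A B x₀ u N ⬝ᵥ H *ᵥ lqState A B x₀ u N

/-- Closed-loop state `x_{t+1} = (A_t + B_t K_t) x_t + B_t v_t`. -/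
def clState {n m : ℕ} (A : ℕ → Matrix (Fin n) (Fin n) ℝ) (B : ℕ → Matrix (Fin n) (Fin m) ℝ)
    (K : ℕ → Matrix (Fin m) (Fin n) ℝ) (v : ℕ → Fin m → ℝ) (x₀ : Fin n → ℝ) :
    ℕ → Fin n → ℝ
  | 0 => x₀
  | t + 1 => (A t + B t * K t) *ᵥ clState A B K v x₀ t + B t *ᵥ v t

/-- Outcome control `u_t = K_t x_t + v_t` of a closed-loop pair. -/
def clControl {n m : ℕ} (A : ℕ → Matrix (Fin n) (Fin n) ℝ) (B : ℕ → Matrix (Fin n) (Fin m) ℝ)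
    (K : ℕ → Matrix (Fin m) (Fin n) ℝ) (v : ℕ → Fin m → ℝ) (x₀ : Fin n → ℝ) (t : ℕ) :
    Fin m → ℝ :=
  K t *ᵥ clState A B K v x₀ t + v t


/-- Perturbed cost `J_ε(x₀,u) = J(x₀,u) + ε Σ|u_t|²`. -/
def lqCostPert {n m : ℕ} (N : ℕ) (A : ℕ → Matrix (Fin n) (Fin n) ℝ)
    (B : ℕ → Matrix (Fin n) (Fin m) ℝ) (Q : ℕ → Matrix (Fin n) (Fin n) ℝ)
    (R : ℕ → Matrix (Fin m) (Fin m) ℝ) (S : ℕ → Matrix (Fin m) (Fin n) ℝ)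
    (H : Matrix (Fin n) (Fin n) ℝ) (ε : ℝ) (x₀ : Fin n → ℝ) (u : ℕ → Fin m → ℝ) : ℝ :=
  lqCost N A B Q R S H x₀ u + ε * ∑ t ∈ range N, u t ⬝ᵥ u t

/-- Auxiliary backward recursion for the perturbed Riccati equation:
`lqPAux ... k` is the Riccati solution at time `N - k`. -/
def lqPAux {n m : ℕ} (N : ℕ) (A : ℕ → Matrix (Fin n) (Fin n) ℝ)
    (B : ℕ → Matrix (Fin n) (Fin m) ℝ) (Q : ℕ → Matrix (Fin n) (Fin n) ℝ)
    (R : ℕ → Matrix (Fin m) (Fin m) ℝ) (S : ℕ → Matrix (Fin m) (Fin n) ℝ)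
    (H : Matrix (Fin n) (Fin n) ℝ) (ε : ℝ) : ℕ → Matrix (Fin n) (Fin n) ℝ
  | 0 => H
  | k + 1 =>
    Q (N - (k + 1)) + (A (N - (k + 1)))ᵀ * lqPAux N A B Q R S H ε k * A (N - (k + 1))
      - ((A (N - (k + 1)))ᵀ * lqPAux N A B Q R S H ε k * B (N - (k + 1)) + (S (N - (k + 1)))ᵀ)
        * (R (N - (k + 1)) + (B (N - (k + 1)))ᵀ * lqPAux N A B Q R S H ε k * B (N - (k + 1))
            + ε • (1 : Matrix (Fin m) (Fin m) ℝ))⁻¹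
        * ((B (N - (k + 1)))ᵀ * lqPAux N A B Q R S H ε k * A (N - (k + 1)) + S (N - (k + 1)))

/-- Solution `P^ε_t` of the perturbed Riccati recursion
`P^ε_N = H`, `P^ε_t = Q_t + A_t′P^ε_{t+1}A_t − (A_t′P^ε_{t+1}B_t + S_t′)(R_t +
B_t′P^ε_{t+1}B_t + εI)⁻¹(B_t′P^ε_{t+1}A_t + S_t)`. -/
def lqPe {n m : ℕ} (N : ℕ) (A : ℕ → Matrix (Fin n) (Fin n) ℝ)
    (B : ℕ → Matrix (Fin n) (Fin m) ℝ) (Q : ℕ → Matrix (Fin n) (Fin n) ℝ)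
    (R : ℕ → Matrix (Fin m) (Fin m) ℝ) (S : ℕ → Matrix (Fin m) (Fin n) ℝ)
    (H : Matrix (Fin n) (Fin n) ℝ) (ε : ℝ) (t : ℕ) : Matrix (Fin n) (Fin n) ℝ :=
  lqPAux N A B Q R S H ε (N - t)

/-- Perturbed feedback gain `K^ε_t = −(R_t + B_t′P^ε_{t+1}B_t + εI)⁻¹(B_t′P^ε_{t+1}A_t + S_t)`. -/
def lqKe {n m : ℕ} (N : ℕ) (A : ℕ → Matrix (Fin n) (Fin n) ℝ)
    (B : ℕ → Matrix (Fin n) (Fin m) ℝ) (Q : ℕ → Matrix (Fin n) (Fin n) ℝ)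
    (R : ℕ → Matrix (Fin m) (Fin m) ℝ) (S : ℕ → Matrix (Fin m) (Fin n) ℝ)
    (H : Matrix (Fin n) (Fin n) ℝ) (ε : ℝ) (t : ℕ) : Matrix (Fin m) (Fin n) ℝ :=
  -((R t + (B t)ᵀ * lqPe N A B Q R S H ε (t + 1) * B t
      + ε • (1 : Matrix (Fin m) (Fin m) ℝ))⁻¹
    * ((B t)ᵀ * lqPe N A B Q R S H ε (t + 1) * A t + S t))

/-- Perturbed optimal control `u^ε_t = K^ε_t x^ε_t`, where `x^ε` is the closed-loop state
`x^ε_{t+1} = (A_t + B_t K^ε_t) x^ε_t`, `x^ε_0 = x₀`. -/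
def lqUe {n m : ℕ} (N : ℕ) (A : ℕ → Matrix (Fin n) (Fin n) ℝ)
    (B : ℕ → Matrix (Fin n) (Fin m) ℝ) (Q : ℕ → Matrix (Fin n) (Fin n) ℝ)
    (R : ℕ → Matrix (Fin m) (Fin m) ℝ) (S : ℕ → Matrix (Fin m) (Fin n) ℝ)
    (H : Matrix (Fin n) (Fin n) ℝ) (ε : ℝ) (x₀ : Fin n → ℝ) (t : ℕ) : Fin m → ℝ :=
  lqKe N A B Q R S H ε t *ᵥ
    clState A B (lqKe N A B Q R S H ε) (fun _ => 0) x₀ t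

section Minimization

open Filter Topology

/-- Tikhonov regularization: exact minimizers of `J + ε ‖·‖²` converge, as `ε → 0⁺`, to a minimizer
of a continuous midpoint-convex function `J` that attains its minimum. -/
theorem exists_tendsto_tikhonov_minimizer {E : Type*} [NormedAddCommGroup E]
    [InnerProductSpace ℝ E] [ProperSpace E] {J : E → ℝ} (hJ : Continuous J)
    (hmid : ∀ a b, J ((1 / 2 : ℝ) • a + (1 / 2 : ℝ) • b) ≤ (J a + J b) / 2)
    (hmin : ∃ a, ∀ v, J a ≤ J v) (u : ℝ → E)
    (hu : ∀ ε, 0 < ε → ∀ v, J (u ε) + ε * ‖u ε‖ ^ 2 ≤ J v + ε * ‖v‖ ^ 2) :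
    ∃ a, (∀ v, J a ≤ J v) ∧ Tendsto u (𝓝[>] 0) (𝓝 a) := by
  have hnorm : ∀ a, (∀ v, J a ≤ J v) → ∀ ε, 0 < ε → ‖u ε‖ ≤ ‖a‖ := fun a ha ε hε ↦ by
    have h : ε * ‖u ε‖ ^ 2 ≤ ε * ‖a‖ ^ 2 := by linarith [hu ε hε a, ha (u ε)]
    exact le_of_sq_le_sq (le_of_mul_le_mul_left h hε) (norm_nonneg a)
  have hpos : ∀ᶠ ε : ℝ in 𝓝[>] 0, 0 < ε := self_mem_nhdsWithin
  have hcluster : ∀ x, MapClusterPt x (𝓝[>] 0) u →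
      (∀ v, J x ≤ J v) ∧ ∀ a, (∀ v, J a ≤ J v) → ‖x‖ ≤ ‖a‖ := fun x hx ↦ by
    obtain ⟨U, hU, hux⟩ := mapClusterPt_iff_ultrafilter.1 hx
    refine ⟨fun v ↦ ?_, fun a ha ↦
      le_of_tendsto hux.norm ((hpos.filter_mono hU).mono fun ε hε ↦ hnorm a ha ε hε)⟩
    have hlim : Tendsto (fun ε : ℝ ↦ J v + ε * ‖v‖ ^ 2) U (𝓝 (J v)) := by
      have : Tendsto (fun ε : ℝ ↦ J v + ε * ‖v‖ ^ 2) (𝓝 0) (𝓝 (J v + 0 * ‖v‖ ^ 2)) :=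
        Continuous.tendsto (by fun_prop) 0
      rw [zero_mul, add_zero] at this
      exact this.mono_left (hU.trans nhdsWithin_le_nhds)
    refine le_of_tendsto_of_tendsto ((hJ.tendsto x).comp hux) hlim
      ((hpos.filter_mono hU).mono fun ε hε ↦ ?_)
    have := hu ε hε v
    have : 0 ≤ ε * ‖u ε‖ ^ 2 := by positivity
    simp only [Function.comp_apply]
    linarith
  obtain ⟨b, hb⟩ := hmin
  have hmem : ∀ᶠ ε in 𝓝[>] (0 : ℝ), u ε ∈ Metric.closedBall 0 ‖b‖ :=
    hpos.mono fun ε hε ↦ by simpa using hnorm b hb ε hε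
  have hcompact : IsCompact (Metric.closedBall (0 : E) ‖b‖) := isCompact_closedBall _ _
  obtain ⟨a, -, ha⟩ := hcompact.exists_mapClusterPt (le_principal_iff.2 (mem_map.2 hmem))
  obtain ⟨hamin, hanorm⟩ := hcluster a ha
  refine ⟨a, hamin, hcompact.tendsto_nhds_of_unique_mapClusterPt hmem fun x _ hx ↦ ?_⟩
  obtain ⟨hxmin, hxnorm⟩ := hcluster x hx
  have hm : ‖a‖ ≤ ‖(1 / 2 : ℝ) • x + (1 / 2 : ℝ) • a‖ :=
    hanorm _ fun v ↦ (hmid x a).trans (by linarith [hxmin v, hamin v])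
  have hxa : ‖x‖ = ‖a‖ := le_antisymm (hxnorm a hamin) (hanorm x hxmin)
  have hpar := parallelogram_law_with_norm ℝ x a
  rw [← smul_add, norm_smul, Real.norm_of_nonneg (by norm_num)] at hm
  have hzero : ‖x - a‖ ^ 2 ≤ 0 := by
    rw [hxa] at hpar
    nlinarith [norm_nonneg a, norm_nonneg (x + a)]
  exact sub_eq_zero.1 (norm_eq_zero.1 (pow_eq_zero_iff two_ne_zero |>.1
    (le_antisymm hzero (sq_nonneg _))))

end Minimization

section Riccati

theorem riccati_completion_of_squares {n m : ℕ} {A Q P : Matrix (Fin n) (Fin n) ℝ}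
    {B : Matrix (Fin n) (Fin m) ℝ} {R M : Matrix (Fin m) (Fin m) ℝ}
    {S G : Matrix (Fin m) (Fin n) ℝ} {ε : ℝ} (hP : P.IsSymm) (hMs : M.IsSymm)
    (hMu : IsUnit M) (hM : R + Bᵀ * P * B + ε • 1 = M) (hG : Bᵀ * P * A + S = G)
    (x : Fin n → ℝ) (u : Fin m → ℝ) :
    x ⬝ᵥ Q *ᵥ x + 2 * (u ⬝ᵥ S *ᵥ x) + u ⬝ᵥ R *ᵥ u + ε * (u ⬝ᵥ u)
        + (A *ᵥ x + B *ᵥ u) ⬝ᵥ P *ᵥ (A *ᵥ x + B *ᵥ u)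
      = x ⬝ᵥ (Q + Aᵀ * P * A - (Aᵀ * P * B + Sᵀ) * M⁻¹ * G) *ᵥ x
        + (u - -(M⁻¹ * G) *ᵥ x) ⬝ᵥ M *ᵥ (u - -(M⁻¹ * G) *ᵥ x) := by
  have hGt : Aᵀ * P * B + Sᵀ = Gᵀ := by
    rw [← hG, transpose_add, transpose_mul, transpose_mul, transpose_transpose, hP.eq,
      Matrix.mul_assoc]
  have hswap : ∀ {k : ℕ} {T : Matrix (Fin k) (Fin k) ℝ} (_ : T.IsSymm) (y z : Fin k → ℝ),
      y ⬝ᵥ T *ᵥ z = z ⬝ᵥ T *ᵥ y := fun hT y z ↦ by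
    rw [← dotProduct_transpose_mulVec, hT.eq]
  set w := M⁻¹ *ᵥ (G *ᵥ x) with hw
  have hMw : M *ᵥ w = G *ᵥ x := by
    rw [hw, mulVec_mulVec, mul_nonsing_inv _ ((isUnit_iff_isUnit_det M).1 hMu), one_mulVec]
  have hK : u - -(M⁻¹ * G) *ᵥ x = u + w := by
    rw [neg_mulVec, sub_neg_eq_add, hw, mulVec_mulVec]
  have hMquad : u ⬝ᵥ M *ᵥ u = u ⬝ᵥ R *ᵥ u + (B *ᵥ u) ⬝ᵥ P *ᵥ (B *ᵥ u) + ε * (u ⬝ᵥ u) := by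
    rw [← hM, add_mulVec, add_mulVec, dotProduct_add, dotProduct_add, Matrix.mul_assoc,
      ← mulVec_mulVec, dotProduct_transpose_mulVec, ← mulVec_mulVec, dotProduct_comm,
      smul_mulVec, one_mulVec, dotProduct_smul, smul_eq_mul]
    rw [dotProduct_comm (P *ᵥ B *ᵥ u), dotProduct_comm (R *ᵥ u)]
  have hGu : u ⬝ᵥ G *ᵥ x = (B *ᵥ u) ⬝ᵥ P *ᵥ (A *ᵥ x) + u ⬝ᵥ S *ᵥ x := by
    rw [← hG, add_mulVec, dotProduct_add, Matrix.mul_assoc, ← mulVec_mulVec,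
      dotProduct_transpose_mulVec, ← mulVec_mulVec, dotProduct_comm (P *ᵥ A *ᵥ x)]
  have hA : x ⬝ᵥ (Aᵀ * P * A) *ᵥ x = (A *ᵥ x) ⬝ᵥ P *ᵥ (A *ᵥ x) := by
    rw [Matrix.mul_assoc, ← mulVec_mulVec, dotProduct_transpose_mulVec, ← mulVec_mulVec,
      dotProduct_comm]
  have hGw : x ⬝ᵥ (Gᵀ * M⁻¹ * G) *ᵥ x = w ⬝ᵥ G *ᵥ x := by
    rw [Matrix.mul_assoc, ← mulVec_mulVec, dotProduct_transpose_mulVec, ← mulVec_mulVec]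
  rw [hK, hGt, sub_mulVec, add_mulVec, dotProduct_sub, dotProduct_add, hA, hGw]
  simp only [mulVec_add, dotProduct_add, add_dotProduct]
  rw [hswap hMs w u, hswap hP (A *ᵥ x) (B *ᵥ u), hMw, hMquad, hGu]
  ring

variable {n m N : ℕ} {A : ℕ → Matrix (Fin n) (Fin n) ℝ} {B : ℕ → Matrix (Fin n) (Fin m) ℝ}
  {Q : ℕ → Matrix (Fin n) (Fin n) ℝ} {R : ℕ → Matrix (Fin m) (Fin m) ℝ}
  {S : ℕ → Matrix (Fin m) (Fin n) ℝ} {H : Matrix (Fin n) (Fin n) ℝ} {ε : ℝ}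

variable (N A B Q R S H ε) in
/-- The matrix `R_t + B_t′P^ε_{t+1}B_t + εI` inverted in the perturbed Riccati recursion. -/
def lqGram (t : ℕ) : Matrix (Fin m) (Fin m) ℝ :=
  R t + (B t)ᵀ * lqPe N A B Q R S H ε (t + 1) * B t + ε • 1

variable (A B Q R S ε) in
/-- The perturbed cost of `u` accumulated before time `s`. -/
def lqPartialCost (x₀ : Fin n → ℝ) (u : ℕ → Fin m → ℝ) (s : ℕ) : ℝ :=
  ∑ t ∈ range s, (lqState A B x₀ u t ⬝ᵥ Q t *ᵥ lqState A B x₀ u t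
    + 2 * (u t ⬝ᵥ S t *ᵥ lqState A B x₀ u t) + u t ⬝ᵥ R t *ᵥ u t + ε * (u t ⬝ᵥ u t))

variable (N A B Q R S H ε) in
/-- The deviation `u_t - K^ε_t x_t` of `u` from the perturbed feedback law. -/
def lqDeviation (x₀ : Fin n → ℝ) (u : ℕ → Fin m → ℝ) (t : ℕ) : Fin m → ℝ :=
  u t - lqKe N A B Q R S H ε t *ᵥ lqState A B x₀ u t

theorem lqPe_self : lqPe N A B Q R S H ε N = H := by
  simp [lqPe, lqPAux]

theorem lqPe_of_lt {t : ℕ} (ht : t < N) :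
    lqPe N A B Q R S H ε t
      = Q t + (A t)ᵀ * lqPe N A B Q R S H ε (t + 1) * A t
        - ((A t)ᵀ * lqPe N A B Q R S H ε (t + 1) * B t + (S t)ᵀ)
          * (lqGram N A B Q R S H ε t)⁻¹
          * ((B t)ᵀ * lqPe N A B Q R S H ε (t + 1) * A t + S t) := by
  have hk : N - t = N - (t + 1) + 1 := by omega
  have hidx : N - (N - (t + 1) + 1) = t := by omega
  rw [lqPe, hk, lqPAux, hidx]
  rfl

theorem lqPAux_isSymm (hQ : ∀ t, (Q t).IsSymm) (hR : ∀ t, (R t).IsSymm) (hH : H.IsSymm) (k : ℕ) :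
    (lqPAux N A B Q R S H ε k).IsSymm := by
  induction k with
  | zero => exact hH
  | succ k ih =>
    rw [lqPAux, IsSymm]
    simp only [transpose_add, transpose_sub, transpose_mul, transpose_transpose,
      transpose_nonsing_inv, transpose_smul, transpose_one, ih.eq, (hQ _).eq, (hR _).eq,
      Matrix.mul_assoc]

theorem lqGram_isSymm (hQ : ∀ t, (Q t).IsSymm) (hR : ∀ t, (R t).IsSymm) (hH : H.IsSymm) (t : ℕ) :
    (lqGram N A B Q R S H ε t).IsSymm := by
  have hP : (lqPe N A B Q R S H ε (t + 1)).IsSymm := lqPAux_isSymm hQ hR hH _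
  simp only [IsSymm, lqGram, transpose_add, transpose_mul, transpose_transpose, transpose_smul,
    transpose_one, hP.eq, (hR t).eq, Matrix.mul_assoc]

theorem lqCostPert_eq_lqPartialCost (x₀ : Fin n → ℝ) (u : ℕ → Fin m → ℝ) :
    lqCostPert N A B Q R S H ε x₀ u
      = lqPartialCost A B Q R S ε x₀ u N + lqState A B x₀ u N ⬝ᵥ H *ᵥ lqState A B x₀ u N := by
  simp only [lqCostPert, lqCost, lqPartialCost, sum_add_distrib, mul_sum]
  ring

theorem lqCostPert_eq_of_isUnit (hQ : ∀ t, (Q t).IsSymm) (hR : ∀ t, (R t).IsSymm)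
    (hH : H.IsSymm) {s : ℕ} (hs : s ≤ N)
    (hunit : ∀ t, s ≤ t → t < N → IsUnit (lqGram N A B Q R S H ε t))
    (x₀ : Fin n → ℝ) (u : ℕ → Fin m → ℝ) :
    lqCostPert N A B Q R S H ε x₀ u
      = lqPartialCost A B Q R S ε x₀ u s
        + lqState A B x₀ u s ⬝ᵥ lqPe N A B Q R S H ε s *ᵥ lqState A B x₀ u s
        + ∑ t ∈ Ico s N, lqDeviation N A B Q R S H ε x₀ u t
            ⬝ᵥ lqGram N A B Q R S H ε t *ᵥ lqDeviation N A B Q R S H ε x₀ u t := by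
  suffices h : ∀ r, s ≤ r → r ≤ N →
      lqPartialCost A B Q R S ε x₀ u r
          + lqState A B x₀ u r ⬝ᵥ lqPe N A B Q R S H ε r *ᵥ lqState A B x₀ u r
        = lqPartialCost A B Q R S ε x₀ u s
          + lqState A B x₀ u s ⬝ᵥ lqPe N A B Q R S H ε s *ᵥ lqState A B x₀ u s
          + ∑ t ∈ Ico s r, lqDeviation N A B Q R S H ε x₀ u t
              ⬝ᵥ lqGram N A B Q R S H ε t *ᵥ lqDeviation N A B Q R S H ε x₀ u t by
    rw [← h N hs le_rfl, lqCostPert_eq_lqPartialCost, lqPe_self]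
  intro r hsr
  induction r, hsr using Nat.le_induction with
  | base => simp
  | succ r hsr ih =>
    intro hr
    have hstep := riccati_completion_of_squares (A := A r) (Q := Q r) (B := B r) (S := S r)
      (P := lqPe N A B Q R S H ε (r + 1)) (lqPAux_isSymm hQ hR hH _) (lqGram_isSymm hQ hR hH r)
      (hunit r hsr hr) rfl rfl (lqState A B x₀ u r) (u r)
    rw [← lqPe_of_lt hr] at hstep
    rw [sum_Ico_succ_top hsr, ← add_assoc, ← ih (Nat.le_of_succ_le hr), lqPartialCost,
      sum_range_succ, ← lqPartialCost, add_assoc, lqState, hstep]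
    exact (add_assoc _ _ _).symm

theorem lqState_clControl (K : ℕ → Matrix (Fin m) (Fin n) ℝ) (v : ℕ → Fin m → ℝ)
    (x₀ : Fin n → ℝ) (t : ℕ) :
    lqState A B x₀ (clControl A B K v x₀) t = clState A B K v x₀ t := by
  induction t with
  | zero => rfl
  | succ t ih =>
    rw [lqState, clState, ih, clControl, mulVec_add, add_mulVec, mulVec_mulVec, add_assoc]

theorem lqDeviation_lqUe (x₀ : Fin n → ℝ) (t : ℕ) :
    lqDeviation N A B Q R S H ε x₀ (lqUe N A B Q R S H ε x₀) t = 0 := by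
  have h : lqUe N A B Q R S H ε x₀
      = clControl A B (lqKe N A B Q R S H ε) (fun _ ↦ 0) x₀ := by
    funext t
    simp [lqUe, clControl]
  rw [lqDeviation, h, lqState_clControl]
  simp [clControl]

theorem lqState_eq_zero {u : ℕ → Fin m → ℝ} {s : ℕ} (hu : ∀ t < s, u t = 0) {t : ℕ} (ht : t ≤ s) :
    lqState A B 0 u t = 0 := by
  induction t with
  | zero => rfl
  | succ t ih => rw [lqState, ih (Nat.le_of_succ_le ht), hu t ht, mulVec_zero, mulVec_zero, add_zero]

theorem lqGram_posDef (hQ : ∀ t, (Q t).IsSymm) (hR : ∀ t, (R t).IsSymm) (hH : H.IsSymm)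
    (hpos : ∀ u : ℕ → Fin m → ℝ, 0 ≤ lqCost N A B Q R S H 0 u) (hε : 0 < ε) {t : ℕ} (ht : t < N) :
    (lqGram N A B Q R S H ε t).PosDef := by
  induction h : N - t using Nat.strong_induction_on generalizing t with
  | _ k ih =>
  subst h
  refine posDef_iff_dotProduct_mulVec.2 ⟨?_, fun v hv ↦ ?_⟩
  · simpa [IsHermitian, conjTranspose_eq_transpose_of_trivial] using
      (lqGram_isSymm hQ hR hH t).eq
  set u := clControl A B (fun s ↦ if s ≤ t then 0 else lqKe N A B Q R S H ε s)
    (fun s ↦ if s = t then v else 0) 0 with hu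
  have hut : u t = v := by simp [hu, clControl]
  have hult : ∀ s < t, u s = 0 := fun s hs ↦ by simp [hu, clControl, hs.le, hs.ne]
  have hdev : ∀ s, t < s → lqDeviation N A B Q R S H ε 0 u s = 0 := fun s hs ↦ by
    rw [lqDeviation, hu, lqState_clControl]
    simp [clControl, hs.not_ge, hs.ne']
  have hcost := lqCostPert_eq_of_isUnit (s := t + 1) hQ hR hH ht
    (fun s hts hs ↦ (ih (N - s) (by omega) hs rfl).isUnit) 0 u
  rw [sum_eq_zero fun s hs ↦ by rw [hdev s (mem_Ico.1 hs).1, zero_dotProduct], add_zero,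
    lqPartialCost, sum_range_succ,
    sum_eq_zero fun s hs ↦ by
      rw [lqState_eq_zero hult (mem_range.1 hs).le, hult s (mem_range.1 hs)]; simp,
    lqState, lqState_eq_zero hult le_rfl, hut] at hcost
  have hgram : star v ⬝ᵥ lqGram N A B Q R S H ε t *ᵥ v = lqCostPert N A B Q R S H ε 0 u := by
    rw [hcost, lqGram, add_mulVec, add_mulVec, Matrix.mul_assoc, ← mulVec_mulVec,
      dotProduct_add, dotProduct_add, star_trivial, dotProduct_transpose_mulVec, ← mulVec_mulVec,
      dotProduct_comm (lqPe N A B Q R S H ε (t + 1) *ᵥ B t *ᵥ v)]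
    simp [smul_mulVec]
    ring
  rw [hgram, lqCostPert]
  refine add_pos_of_nonneg_of_pos (hpos u) (mul_pos hε ?_)
  have hvv : 0 < u t ⬝ᵥ u t := by
    rw [hut]
    simpa using dotProduct_star_self_pos_iff.2 hv
  exact hvv.trans_le (single_le_sum (f := fun s ↦ u s ⬝ᵥ u s)
    (fun s _ ↦ by simpa using dotProduct_star_self_nonneg (u s)) (mem_range.2 ht))

theorem lqCostPert_lqUe_le (hQ : ∀ t, (Q t).IsSymm) (hR : ∀ t, (R t).IsSymm) (hH : H.IsSymm)
    (hpos : ∀ u : ℕ → Fin m → ℝ, 0 ≤ lqCost N A B Q R S H 0 u) (hε : 0 < ε)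
    (x₀ : Fin n → ℝ) (u : ℕ → Fin m → ℝ) :
    lqCostPert N A B Q R S H ε x₀ (lqUe N A B Q R S H ε x₀) ≤ lqCostPert N A B Q R S H ε x₀ u := by
  have hcost := lqCostPert_eq_of_isUnit hQ hR hH (Nat.zero_le N)
    (fun t _ ht ↦ (lqGram_posDef hQ hR hH hpos hε ht).isUnit) x₀
  rw [hcost (lqUe N A B Q R S H ε x₀), hcost u]
  simp only [lqDeviation_lqUe, zero_dotProduct, sum_const_zero, add_zero]
  refine le_add_of_nonneg_right (sum_nonneg fun t ht ↦ ?_)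
  simpa using (lqGram_posDef hQ hR hH hpos hε (mem_Ico.1 ht).2).posSemidef.dotProduct_mulVec_nonneg
    (lqDeviation N A B Q R S H ε x₀ u t)

end Riccati

section ControlSpace

variable {n m N : ℕ} {A : ℕ → Matrix (Fin n) (Fin n) ℝ} {B : ℕ → Matrix (Fin n) (Fin m) ℝ}
  {Q : ℕ → Matrix (Fin n) (Fin n) ℝ} {R : ℕ → Matrix (Fin m) (Fin m) ℝ}
  {S : ℕ → Matrix (Fin m) (Fin n) ℝ} {H : Matrix (Fin n) (Fin n) ℝ}

theorem lqState_linear_combination (c d : ℝ) (x y : Fin n → ℝ) (u v : ℕ → Fin m → ℝ) (t : ℕ) :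
    lqState A B (c • x + d • y) (c • u + d • v) t
      = c • lqState A B x u t + d • lqState A B y v t := by
  induction t with
  | zero => rfl
  | succ t ih =>
    simp only [lqState, ih, Pi.add_apply, Pi.smul_apply, mulVec_add, mulVec_smul, smul_add]
    abel

theorem lqCost_parallelogram (x y : Fin n → ℝ) (u v : ℕ → Fin m → ℝ) :
    lqCost N A B Q R S H ((1 / 2 : ℝ) • x + (1 / 2 : ℝ) • y) ((1 / 2 : ℝ) • u + (1 / 2 : ℝ) • v)
        + lqCost N A B Q R S H ((1 / 2 : ℝ) • x + (-1 / 2 : ℝ) • y)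
          ((1 / 2 : ℝ) • u + (-1 / 2 : ℝ) • v)
      = (lqCost N A B Q R S H x u + lqCost N A B Q R S H y v) / 2 := by
  simp only [lqCost, lqState_linear_combination]
  rw [add_add_add_comm, ← sum_add_distrib, add_add_add_comm (∑ _ ∈ _, _), ← sum_add_distrib,
    add_div, sum_div]
  congr 1
  · refine sum_congr rfl fun t _ ↦ ?_
    simp only [Pi.add_apply, Pi.smul_apply, mulVec_add, mulVec_smul, dotProduct_add,
      add_dotProduct, dotProduct_smul, smul_dotProduct, smul_eq_mul]
    ring
  · simp only [mulVec_add, mulVec_smul, dotProduct_add, add_dotProduct, dotProduct_smul,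
      smul_dotProduct, smul_eq_mul]
    ring

theorem lqCost_midpoint_le (hpos : ∀ u : ℕ → Fin m → ℝ, 0 ≤ lqCost N A B Q R S H 0 u)
    (x₀ : Fin n → ℝ) (u v : ℕ → Fin m → ℝ) :
    lqCost N A B Q R S H x₀ ((1 / 2 : ℝ) • u + (1 / 2 : ℝ) • v)
      ≤ (lqCost N A B Q R S H x₀ u + lqCost N A B Q R S H x₀ v) / 2 := by
  have h := lqCost_parallelogram (N := N) (A := A) (B := B) (Q := Q) (R := R) (S := S) (H := H)
    x₀ x₀ u v
  rw [← add_smul, ← add_smul, show (1 / 2 + 1 / 2 : ℝ) = 1 by norm_num,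
    show (1 / 2 + -1 / 2 : ℝ) = 0 by norm_num, one_smul, zero_smul] at h
  linarith [hpos ((1 / 2 : ℝ) • u + (-1 / 2 : ℝ) • v)]

theorem continuous_lqState (x₀ : Fin n → ℝ) (t : ℕ) :
    Continuous fun u : ℕ → Fin m → ℝ ↦ lqState A B x₀ u t := by
  induction t with
  | zero => exact continuous_const
  | succ t ih =>
    exact (continuous_const.matrix_mulVec ih).add
      (continuous_const.matrix_mulVec (continuous_apply t))

theorem continuous_lqCost (x₀ : Fin n → ℝ) :
    Continuous fun u : ℕ → Fin m → ℝ ↦ lqCost N A B Q R S H x₀ u := by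
  have hx := continuous_lqState (A := A) (B := B) x₀
  have hu := fun t ↦ continuous_apply (A := fun _ : ℕ ↦ Fin m → ℝ) t
  exact (continuous_finsetSum _ fun t _ ↦
    (((hx t).dotProduct (continuous_const.matrix_mulVec (hx t))).add
      (continuous_const.mul ((hu t).dotProduct (continuous_const.matrix_mulVec (hx t))))).add
      ((hu t).dotProduct (continuous_const.matrix_mulVec (hu t)))).add
    ((hx N).dotProduct (continuous_const.matrix_mulVec (hx N)))

theorem lqState_congr {x₀ : Fin n → ℝ} {u v : ℕ → Fin m → ℝ} (huv : ∀ t < N, u t = v t) {t : ℕ}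
    (ht : t ≤ N) : lqState A B x₀ u t = lqState A B x₀ v t := by
  induction t with
  | zero => rfl
  | succ t ih => rw [lqState, lqState, ih (Nat.le_of_succ_le ht), huv t ht]

theorem lqCost_congr {x₀ : Fin n → ℝ} {u v : ℕ → Fin m → ℝ} (huv : ∀ t < N, u t = v t) :
    lqCost N A B Q R S H x₀ u = lqCost N A B Q R S H x₀ v := by
  rw [lqCost, lqCost, lqState_congr huv le_rfl]
  congr 1
  refine sum_congr rfl fun t ht ↦ ?_
  rw [lqState_congr huv (mem_range.1 ht).le, huv t (mem_range.1 ht)]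

/-- Extension by zero of a control on `{0, …, N - 1}`. -/
def extendControl (e : EuclideanSpace ℝ (Fin N × Fin m)) (t : ℕ) (i : Fin m) : ℝ :=
  if h : t < N then e (⟨t, h⟩, i) else 0

variable (N) in
/-- Restriction of a control to `{0, …, N - 1}`. -/
def restrictControl (u : ℕ → Fin m → ℝ) : EuclideanSpace ℝ (Fin N × Fin m) :=
  WithLp.toLp 2 fun p ↦ u p.1 p.2

theorem extendControl_restrictControl (u : ℕ → Fin m → ℝ) {t : ℕ} (ht : t < N) :
    extendControl (restrictControl N u) t = u t := by
  funext i
  simp [extendControl, restrictControl, ht]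

theorem extendControl_linear_combination (c d : ℝ) (a b : EuclideanSpace ℝ (Fin N × Fin m)) :
    extendControl (c • a + d • b) = c • extendControl a + d • extendControl b := by
  funext t i
  by_cases ht : t < N <;> simp [extendControl, ht]

theorem continuous_extendControl :
    Continuous (extendControl : EuclideanSpace ℝ (Fin N × Fin m) → ℕ → Fin m → ℝ) := by
  refine continuous_pi fun t ↦ continuous_pi fun i ↦ ?_
  by_cases ht : t < N
  · simp only [extendControl, ht, dite_true]
    fun_prop
  · simp only [extendControl, ht, dite_false]
    fun_prop

theorem norm_sq_restrictControl (u : ℕ → Fin m → ℝ) :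
    ‖restrictControl N u‖ ^ 2 = ∑ t ∈ range N, u t ⬝ᵥ u t := by
  rw [EuclideanSpace.real_norm_sq_eq, Fintype.sum_prod_type, sum_range]
  simp only [restrictControl, dotProduct, sq]

theorem restrictControl_extendControl (e : EuclideanSpace ℝ (Fin N × Fin m)) :
    restrictControl N (extendControl e) = e := by
  ext p
  simp [restrictControl, extendControl]

end ControlSpace

/-- Theorem 4 (1) ⇒ (3) and Corollary 1: if Problem (LQ) is open-loop
solvable at `x₀`, then the family `{u^ε}` converges strongly, as `ε → 0⁺`, to an
open-loop optimal control `u*` of Problem (LQ) for `x₀`. -/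
theorem stmt_12 {n m : ℕ} (hn : 0 < n) (hm : 0 < m) (N : ℕ) (hN : 0 < N)
    (A : ℕ → Matrix (Fin n) (Fin n) ℝ) (B : ℕ → Matrix (Fin n) (Fin m) ℝ)
    (Q : ℕ → Matrix (Fin n) (Fin n) ℝ) (R : ℕ → Matrix (Fin m) (Fin m) ℝ)
    (S : ℕ → Matrix (Fin m) (Fin n) ℝ) (H : Matrix (Fin n) (Fin n) ℝ)
    (hQ : ∀ t, (Q t).IsSymm) (hR : ∀ t, (R t).IsSymm) (hH : H.IsSymm)
    (hpos : ∀ u : ℕ → Fin m → ℝ, 0 ≤ lqCost N A B Q R S H 0 u)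
    (x₀ : Fin n → ℝ)
    (hsolv : ∃ ubar : ℕ → Fin m → ℝ, ∀ u : ℕ → Fin m → ℝ,
      lqCost N A B Q R S H x₀ ubar ≤ lqCost N A B Q R S H x₀ u) :
    ∃ ustar : ℕ → Fin m → ℝ,
      (∀ u : ℕ → Fin m → ℝ,
        lqCost N A B Q R S H x₀ ustar ≤ lqCost N A B Q R S H x₀ u) ∧
      Filter.Tendsto
        (fun ε : ℝ => ∑ t ∈ range N,
          (lqUe N A B Q R S H ε x₀ t - ustar t) ⬝ᵥ (lqUe N A B Q R S H ε x₀ t - ustar t))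
        (nhdsWithin 0 (Set.Ioi 0)) (nhds 0) := by
  have hJ : ∀ u : ℕ → Fin m → ℝ,
      lqCost N A B Q R S H x₀ (extendControl (restrictControl N u)) = lqCost N A B Q R S H x₀ u :=
    fun u ↦ lqCost_congr fun t ht ↦ extendControl_restrictControl u ht
  obtain ⟨ubar, hubar⟩ := hsolv
  obtain ⟨a, ha, hlim⟩ := exists_tendsto_tikhonov_minimizer
    (J := fun e : EuclideanSpace ℝ (Fin N × Fin m) ↦
      lqCost N A B Q R S H x₀ (extendControl e))
    ((continuous_lqCost x₀).comp continuous_extendControl)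
    (fun a b ↦ by
      simpa only [extendControl_linear_combination] using lqCost_midpoint_le hpos x₀ _ _)
    ⟨restrictControl N ubar, fun v ↦ by simpa only [hJ] using hubar _⟩
    (fun ε ↦ restrictControl N (lqUe N A B Q R S H ε x₀))
    (fun ε hε v ↦ by
      have h := lqCostPert_lqUe_le hQ hR hH hpos hε x₀ (extendControl v)
      simpa only [lqCostPert, hJ, ← norm_sq_restrictControl, restrictControl_extendControl] using h)
  refine ⟨extendControl a, fun u ↦ by simpa only [hJ] using ha (restrictControl N u), ?_⟩
  have hnorm := (tendsto_iff_norm_sub_tendsto_zero.1 hlim).pow 2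
  rw [zero_pow two_ne_zero] at hnorm
  refine hnorm.congr fun ε ↦ ?_
  rw [← norm_sq_restrictControl (u := fun t ↦ lqUe N A B Q R S H ε x₀ t - extendControl a t)]
  congr 2
  conv_lhs => rw [← restrictControl_extendControl a]
  rfl
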